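/- arXiv:1309.5618 — 9 statements merged into one kernel-verified Lean document; each statement's English description precedes it below -/
import Mathlib

section
/- Let 1 ≤ i < j be integers, L = j − i + 1 and m = ⌊log₂ L⌋. Then Len(ℓ, j) < Len(ℓ+1, j) for all ℓ ≥ 1, Len(2m−1, j) < 2^m ≤ L, and Len(2m+2, j) ≥ 2^{m+1} > L; consequently α(i, j) ∈ {2m−1, 2m, 2m+1}. -/
/-!
Write `m = ⌊log₂ L⌋`, so `2^m ≤ L < 2^(m+1)`. The values `Len (2k+2) j` and `Len (2k+3) j` are
`2·2^k + r` and `3·2^k + r` with `r = j mod 2^k < 2^k`; hence both lie in `[2^(k+1), 2^(k+2))`,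
and `Len · j` is strictly increasing inside each such dyadic block as well as from one block to
the next. Thus `Len (2m-1) j < 2^m ≤ L < 2^(m+1) ≤ Len (2m+2) j`, and monotonicity confines the
largest `ℓ` with `Len ℓ j < L` to `2m-1 ≤ ℓ < 2m+2`.
-/

/-- `Len ℓ j`: for `ℓ = 1` it is `1`; for `ℓ ≥ 2`, with `m = ⌊ℓ/2⌋ - 1`, it is
`2·2^m + (j mod 2^m)` if `ℓ` is even and `3·2^m + (j mod 2^m)` if `ℓ` is odd. -/
def Len (ℓ j : ℕ) : ℕ :=
  if ℓ = 1 then 1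
  else if ℓ % 2 = 0 then 2 * 2 ^ (ℓ / 2 - 1) + j % 2 ^ (ℓ / 2 - 1)
  else 3 * 2 ^ (ℓ / 2 - 1) + j % 2 ^ (ℓ / 2 - 1)

theorem Len_one (j : ℕ) : Len 1 j = 1 := by simp [Len]

theorem Len_even (k j : ℕ) : Len (2 * k + 2) j = 2 * 2 ^ k + j % 2 ^ k := by
  have h1 : (2 * k + 2) / 2 - 1 = k := by omega
  have h2 : (2 * k + 2) % 2 = 0 := by omega
  have h3 : 2 * k + 2 ≠ 1 := by omega
  simp only [Len, h1, h2, h3, if_true, if_false]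

theorem Len_odd (k j : ℕ) : Len (2 * k + 3) j = 3 * 2 ^ k + j % 2 ^ k := by
  have h1 : (2 * k + 3) / 2 - 1 = k := by omega
  have h2 : ¬ (2 * k + 3) % 2 = 0 := by omega
  have h3 : 2 * k + 3 ≠ 1 := by omega
  simp only [Len, h1, h2, h3, if_false]

theorem Len_lt_succ (j ℓ : ℕ) (hℓ : 1 ≤ ℓ) : Len ℓ j < Len (ℓ + 1) j := by
  obtain rfl | ⟨k, rfl | rfl⟩ : ℓ = 1 ∨ ∃ k, ℓ = 2 * k + 2 ∨ ℓ = 2 * k + 3 := by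
    by_cases h : ℓ = 1
    · exact Or.inl h
    · exact Or.inr ⟨ℓ / 2 - 1, by omega⟩
  · have h := Len_even 0 j
    norm_num at h
    rw [Len_one, h]
    omega
  · rw [Len_odd, Len_even]
    have := Nat.two_pow_pos k
    omega
  · rw [Len_odd, show 2 * k + 3 + 1 = 2 * (k + 1) + 2 by ring, Len_even, pow_succ]
    have := Nat.mod_lt j (Nat.two_pow_pos k)
    omega

theorem Len_mono (j : ℕ) {a b : ℕ} (ha : 1 ≤ a) (hab : a ≤ b) : Len a j ≤ Len b j := by
  induction b, hab using Nat.le_induction with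
  | base => exact le_rfl
  | succ n hn ih => exact ih.trans (Len_lt_succ j n (ha.trans hn)).le

theorem Len_lt_two_pow (j m : ℕ) (hm : 1 ≤ m) : Len (2 * m - 1) j < 2 ^ m := by
  obtain rfl | ⟨k, rfl⟩ : m = 1 ∨ ∃ k, m = k + 2 := by
    by_cases h : m = 1
    · exact Or.inl h
    · exact Or.inr ⟨m - 2, by omega⟩
  · norm_num [Len_one]
  · rw [show 2 * (k + 2) - 1 = 2 * k + 3 by omega, Len_odd, pow_add]
    have := Nat.mod_lt j (Nat.two_pow_pos k)
    omega

/-- Let `1 ≤ i < j`, `L = j - i + 1` and `m = ⌊log₂ L⌋`.  Then `Len(·, j)` is strictly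
increasing on `ℓ ≥ 1`, `Len(2m-1, j) < 2^m ≤ L`, `Len(2m+2, j) ≥ 2^(m+1) > L`, and
consequently `α(i,j)`, the largest `ℓ ≥ 1` with `Len(ℓ, j) < j - i + 1`, lies in
`{2m-1, 2m, 2m+1}`. -/
theorem stmt_1 (i j A : ℕ) (hi : 1 ≤ i) (hij : i < j)
    (hA1 : 1 ≤ A) (hA2 : Len A j < j - i + 1)
    (hA3 : ∀ ℓ, 1 ≤ ℓ → Len ℓ j < j - i + 1 → ℓ ≤ A) :
    (∀ ℓ, 1 ≤ ℓ → Len ℓ j < Len (ℓ + 1) j) ∧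
    Len (2 * Nat.log 2 (j - i + 1) - 1) j < 2 ^ Nat.log 2 (j - i + 1) ∧
    2 ^ Nat.log 2 (j - i + 1) ≤ j - i + 1 ∧
    2 ^ (Nat.log 2 (j - i + 1) + 1) ≤ Len (2 * Nat.log 2 (j - i + 1) + 2) j ∧
    j - i + 1 < 2 ^ (Nat.log 2 (j - i + 1) + 1) ∧
    (A = 2 * Nat.log 2 (j - i + 1) - 1 ∨ A = 2 * Nat.log 2 (j - i + 1) ∨
      A = 2 * Nat.log 2 (j - i + 1) + 1) := by
  have hm : 1 ≤ Nat.log 2 (j - i + 1) := Nat.log_pos (by norm_num) (by omega)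
  have hle : 2 ^ Nat.log 2 (j - i + 1) ≤ j - i + 1 := Nat.pow_log_le_self 2 (by omega)
  have hlt : j - i + 1 < 2 ^ (Nat.log 2 (j - i + 1) + 1) :=
    Nat.lt_pow_succ_log_self (by norm_num) _
  have hlow := Len_lt_two_pow j _ hm
  have hhigh : 2 ^ (Nat.log 2 (j - i + 1) + 1) ≤ Len (2 * Nat.log 2 (j - i + 1) + 2) j := by
    rw [Len_even, pow_succ]
    omega
  refine ⟨Len_lt_succ j, hlow, hle, hhigh, hlt, ?_⟩
  have h1 := hA3 _ (by omega) (hlow.trans_le hle)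
  have h2 : A < 2 * Nat.log 2 (j - i + 1) + 2 := by
    by_contra! h
    have := Len_mono j (by omega) h
    omega
  omega
end

section
/- Let T be a string of length n and 1 ≤ i < j ≤ n. Let p ∈ [i, j] be the position such that T[p..] is the lexicographically minimal element of Suf[i, j], and let α = α(i, j). Then the minimal suffix of T[i..j] is either T[p..j] or the minimal suffix of the canonical substring S_j^α. -/
/-!
Write `w = T[i..j]`, let `s` be its minimal suffix, `t = T[p..j]`, and suppose `s ≠ t`.
By minimality `s ≺ t`, whereas the continuations to the end of `T` satisfy `T[p..] = t·r ⪯ s·r`.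
Appending `r` can only reverse the comparison if `s` is a proper prefix of `t`
(`lex_append_or_prefix`), so `s` is a border of `t`.  A minimal suffix has no proper border, since
such a border would be a smaller suffix; hence the two occurrences of `s` in `t` do not
overlap and `2|s| ≤ |t| ≤ |w|` (`two_mul_length_le`).

Consecutive canonical lengths grow by a factor of at most two (`Len_succ_le`), and by maximality
of `A` we have `|w| ≤ Len (A+1) j ≤ 2 * Len A j`.  So `|s| ≤ Len A j`, i.e. `s` is a suffix of the
canonical substring, which is a suffix of `w`; therefore `s` is minimal there as well.
-/

variable {α : Type*} [LinearOrder α]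

/-- `substr T i j` is the 1-indexed substring `T[i..j]` (inclusive). -/
def substr (T : List α) (i j : ℕ) : List α := (T.drop (i - 1)).take (j - i + 1)

/-- `sufFrom T i` is the 1-indexed suffix `T[i..]`. -/
def sufFrom (T : List α) (i : ℕ) : List α := T.drop (i - 1)

/-- `s` is the lexicographically minimal nonempty suffix of `w`. -/
def IsMinSuffix (w s : List α) : Prop :=
  s ≠ [] ∧ s <:+ w ∧ ∀ t, t ≠ [] → t <:+ w → ¬ List.Lex (· < ·) t s

/-- A strict lexicographic comparison survives appending arbitrary strings unless the smaller
string is a prefix of the larger one. -/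
theorem lex_append_or_prefix {s t : List α} (h : List.Lex (· < ·) s t) (r r' : List α) :
    s <+: t ∨ List.Lex (· < ·) (s ++ r) (t ++ r') := by
  induction h with
  | nil => exact Or.inl List.nil_prefix
  | @cons a l₁ l₂ _ ih =>
    rcases ih with ih | ih
    · exact Or.inl ((List.prefix_cons_inj a).2 ih)
    · exact Or.inr (List.Lex.cons ih)
  | rel hab => exact Or.inr (List.Lex.rel hab)

theorem lex_self_append (b : List α) {u : List α} (hu : u ≠ []) :
    List.Lex (· < ·) b (b ++ u) := by
  induction b with
  | nil =>
    cases u with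
    | nil => exact absurd rfl hu
    | cons a l => exact List.Lex.nil
  | cons a l ih => exact List.Lex.cons ih

/-- The minimal suffix `s` of `w` fits twice into any other suffix `t` of `w` for which
`t ++ r ⪯ s ++ r` for some string `r`. -/
theorem two_mul_length_le {w s t r : List α} (hs : IsMinSuffix w s) (ht0 : t ≠ [])
    (ht : t <:+ w) (hne : s ≠ t) (hr : ¬ List.Lex (· < ·) (s ++ r) (t ++ r)) :
    2 * s.length ≤ t.length := by
  obtain ⟨hs0, hsw, hmin⟩ := hs
  have hlt : List.Lex (· < ·) s t := by
    rcases lt_trichotomy s t with h | h | h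
    · exact h
    · exact absurd h hne
    · exact absurd h (hmin t ht0 ht)
  obtain ⟨u, rfl⟩ := (lex_append_or_prefix hlt r r).resolve_right hr
  have hu : u ≠ [] := by
    rintro rfl
    simp at hne
  obtain ⟨v, hv⟩ := List.suffix_of_suffix_length_le hsw ht (by simp)
  by_contra hlen
  have hvlen := congrArg List.length hv
  simp only [List.length_append] at hvlen hlen
  -- The prefix and suffix occurrences of `s` overlap in a string `b`, a proper border of `s`.
  have hvs : v <+: s :=
    List.prefix_of_prefix_length_le ⟨s, hv⟩ (List.prefix_append s u) (by omega)
  obtain ⟨b, hb⟩ := hvs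
  have hbu : s = b ++ u := by
    have h : v ++ s = v ++ (b ++ u) := by rw [hv, ← List.append_assoc, hb]
    exact List.append_cancel_left h
  have hb0 : b ≠ [] := by
    rintro rfl
    have := congrArg List.length hb
    simp only [List.length_append, List.length_nil] at this
    omega
  refine hmin b hb0 (List.IsSuffix.trans ⟨v, hb⟩ hsw) ?_
  have h := lex_self_append b hu
  rwa [← hbu] at h

theorem Len_succ_le (ℓ j : ℕ) (hℓ : 1 ≤ ℓ) : Len (ℓ + 1) j ≤ 2 * Len ℓ j := by
  unfold Len
  rcases Nat.even_or_odd' ℓ with ⟨k, rfl | rfl⟩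
  · have h1 : (2 * k + 1) / 2 - 1 = k - 1 := by omega
    have h2 : 2 * k / 2 - 1 = k - 1 := by omega
    rw [if_neg (by omega), if_neg (by omega), if_neg (by omega), if_pos (by omega), h1, h2]
    omega
  · rcases k with _ | m
    · simp [Nat.mod_one]
    · have h1 : (2 * (m + 1) + 1 + 1) / 2 - 1 = m + 1 := by omega
      have h2 : (2 * (m + 1) + 1) / 2 - 1 = m := by omega
      rw [if_neg (by omega), if_pos (by omega), if_neg (by omega), if_neg (by omega), h1, h2]
      have h3 := Nat.mod_lt j (show 0 < 2 ^ (m + 1) by positivity)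
      rw [pow_succ] at h3 ⊢
      omega

theorem Len_pos (ℓ j : ℕ) : 0 < Len ℓ j := by
  unfold Len
  split_ifs <;> positivity

theorem substr_eq_drop {β : Type*} (T : List β) {i j q : ℕ} (hi : 1 ≤ i) (hiq : i ≤ q)
    (hqj : q ≤ j) :
    substr T q j = (substr T i j).drop (q - i) := by
  unfold substr
  rw [List.drop_take, List.drop_drop]
  congr 2 <;> omega

theorem substr_append {β : Type*} (T : List β) {q j : ℕ} (hq : 1 ≤ q) (hqj : q ≤ j) :
    substr T q j ++ T.drop j = sufFrom T q := by
  unfold substr sufFrom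
  have h : T.drop j = (T.drop (q - 1)).drop (j - q + 1) := by
    rw [List.drop_drop]
    congr 1
    omega
  rw [h, List.take_append_drop]

theorem length_substr {β : Type*} (T : List β) {q j : ℕ} (hq : 1 ≤ q) (hqj : q ≤ j)
    (hj : j ≤ T.length) :
    (substr T q j).length = j - q + 1 := by
  simp only [substr, List.length_take, List.length_drop]
  omega

/-- Let `T` be a string of length `n`, `1 ≤ i < j ≤ n`, let `p ∈ [i,j]` be the position of the
lexicographically minimal suffix in `Suf[i,j]`, and let `A = α(i,j)` (the largest `ℓ ≥ 1` with
`Len(ℓ,j) < j - i + 1`).  Then the minimal suffix of `T[i..j]` is either `T[p..j]` or the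
minimal suffix of the canonical substring `S_j^A`. -/
theorem stmt_2 (T : List α) (i j p A : ℕ)
    (hi : 1 ≤ i) (hij : i < j) (hj : j ≤ T.length)
    (hp1 : i ≤ p) (hp2 : p ≤ j)
    (hpmin : ∀ q, i ≤ q → q ≤ j → ¬ List.Lex (· < ·) (sufFrom T q) (sufFrom T p))
    (hA1 : 1 ≤ A) (hA2 : Len A j < j - i + 1)
    (hA3 : ∀ ℓ, 1 ≤ ℓ → Len ℓ j < j - i + 1 → ℓ ≤ A) :
    ∀ s, IsMinSuffix (substr T i j) s →
      s = substr T p j ∨ IsMinSuffix (substr T (j - Len A j + 1) j) s := by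
  intro s hs
  rw [or_iff_not_imp_left]
  intro hne
  have hLpos := Len_pos A j
  have hw := length_substr T hi hij.le hj
  have htlen := length_substr T (hi.trans hp1) hp2 hj
  have hslen : s.length ≤ j - i + 1 := hw ▸ hs.2.1.length_le
  have hspos : 0 < s.length := List.length_pos_iff.2 hs.1
  -- `s = T[q..j]` for the position `q = j + 1 - |s|`.
  have hsq : s = substr T (j + 1 - s.length) j := by
    rw [substr_eq_drop T hi (q := j + 1 - s.length) (by omega) (by omega)]
    have h := List.suffix_iff_eq_drop.1 hs.2.1
    rw [hw] at h
    rw [show j + 1 - s.length - i = j - i + 1 - s.length by omega]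
    exact h
  have hsr : s ++ T.drop j = sufFrom T (j + 1 - s.length) := by
    conv_lhs => rw [hsq]
    exact substr_append T (by omega) (by omega)
  have hts : substr T p j <:+ substr T i j := by
    rw [substr_eq_drop T hi hp1 hp2]
    exact List.drop_suffix _ _
  have h2 : 2 * s.length ≤ (substr T p j).length := by
    refine two_mul_length_le (r := T.drop j) hs ?_ hts hne ?_
    · exact List.length_pos_iff.1 (by omega)
    · rw [hsr, substr_append T (hi.trans hp1) hp2]
      exact hpmin _ (by omega) (by omega)
  have hA4 : j - i + 1 ≤ Len (A + 1) j := by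
    by_contra h
    have := hA3 (A + 1) (by omega) (by omega)
    omega
  have hA5 := Len_succ_le A j hA1
  have hSw : substr T (j - Len A j + 1) j <:+ substr T i j := by
    rw [substr_eq_drop T hi (q := j - Len A j + 1) (by omega) (by omega)]
    exact List.drop_suffix _ _
  have hSlen := length_substr T (q := j - Len A j + 1) (by omega) (by omega) hj
  exact ⟨hs.1, List.suffix_of_suffix_length_le hs.2.1 hSw (by omega),
    fun t ht0 ht => hs.2.2 t ht0 (ht.trans hSw)⟩
end

section
/- If x = w_1^{α_1} w_2^{α_2} ⋯ w_k^{α_k} is a Lyndon decomposition of a nonempty string x, then w_k is the minimal suffix of x. -/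
/-!
A Lyndon word `w` is at most each of its nonempty suffixes `v` (`IsLyndon.le_suffix`). Otherwise
`v < w = u v`. If `v` and `w` differ at some position, then `v u < w`, contradicting that `w` is
below its rotations. If `v` is a prefix of `w`, say `w = u v = v u'` with `|u| = |u'|`, then
`v u' = w < v u` gives `u' < u`, hence `u' v < u v = w`, and `u' v` is again a rotation of `w`.

A nonempty suffix `t` of `x = w₁^{a₁} ⋯ w_k^{a_k}` starts inside some copy of some `wᵢ`
(`exists_suffix_of_suffix_flatten`), so `t = s r` with `s` a nonempty suffix of `wᵢ`. Therefore
`t ≥ s ≥ wᵢ ≥ w_k`.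
-/

variable {α : Type*} [LinearOrder α]

/-- `w` is a Lyndon word: it is nonempty and lexicographically strictly smaller than all of its
proper cyclic rotations. -/
def IsLyndon (w : List α) : Prop :=
  w ≠ [] ∧ ∀ u v : List α, u ≠ [] → v ≠ [] → w = u ++ v → List.Lex (· < ·) w (v ++ u)

/-- `lrep w a` is `w^a`, the concatenation of `a` copies of `w`. -/
def lrep (w : List α) (a : ℕ) : List α := (List.replicate a w).flatten

/-- A nonempty suffix of a concatenation begins inside one of the concatenated words. -/
theorem exists_suffix_of_suffix_flatten {β : Type*} (L : List (List β)) (t : List β) (ht : t ≠ [])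
    (h : t <:+ L.flatten) :
    ∃ w ∈ L, ∃ s r : List β, s ≠ [] ∧ s <:+ w ∧ t = s ++ r := by
  induction L with
  | nil => simp_all
  | cons w L ih =>
    obtain ⟨p, hp⟩ := h
    rw [List.flatten_cons, List.append_eq_append_iff] at hp
    rcases hp with ⟨s, rfl, rfl⟩ | ⟨q, rfl, hq⟩
    · by_cases hs : s = []
      · subst hs
        obtain ⟨y, hy, hyt⟩ := ih (by simp)
        exact ⟨y, List.mem_cons_of_mem _ hy, hyt⟩
      · exact ⟨p ++ s, by simp, s, _, hs, List.suffix_append _ _, rfl⟩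
    · obtain ⟨y, hy, hyt⟩ := ih ⟨q, hq.symm⟩
      exact ⟨y, List.mem_cons_of_mem _ hy, hyt⟩

/-- If `v < w`, then either `v` is a prefix of `w`, or they differ at some position and the
inequality survives arbitrary extension on the right. -/
theorem prefix_or_append_lt {v w : List α} (h : List.Lex (· < ·) v w) :
    v <+: w ∨ ∀ a b : List α, v ++ a < w ++ b := by
  induction h with
  | nil => exact Or.inl List.nil_prefix
  | rel h => exact Or.inr fun a b => List.Lex.rel h
  | cons h ih =>
    rcases ih with ih | ih
    · exact Or.inl (by simpa using ih)
    · exact Or.inr fun a b => List.Lex.cons (ih a b)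

theorem self_le_append (s r : List α) : s ≤ s ++ r := by
  rw [← not_lt]
  induction s with
  | nil => exact List.not_lt_nil _
  | cons a s ih => simpa [List.cons_lt_cons_iff] using ih

theorem lt_of_append_lt_append_left {v a b : List α} (h : v ++ a < v ++ b) : a < b := by
  induction v with
  | nil => simpa using h
  | cons c v ih => exact ih (by simpa [List.cons_lt_cons_iff] using h)

/-- A Lyndon word is a lower bound of its nonempty suffixes. -/
theorem IsLyndon.le_suffix {w v : List α} (hw : IsLyndon w) (hv : v ≠ []) (h : v <:+ w) :
    w ≤ v := by
  obtain ⟨u, rfl⟩ := h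
  by_contra hlt
  rw [not_le] at hlt
  have hu : u ≠ [] := by
    rintro rfl
    simp at hlt
  have h1 : u ++ v < v ++ u := hw.2 u v hu hv rfl
  rcases prefix_or_append_lt hlt with ⟨u', hu'⟩ | hd
  · have hlen : u'.length = u.length := by
      have := congrArg List.length hu'
      simp at this
      omega
    have h2 : u' < u := by
      rw [← hu'] at h1
      exact lt_of_append_lt_append_left h1
    have hu0 : u' ≠ [] := by
      rintro rfl
      simp_all
    have h3 : u ++ v < u' ++ v := hw.2 v u' hv hu0 hu'.symm
    rcases prefix_or_append_lt h2 with hp | hd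
    · exact h2.ne (hp.eq_of_length hlen)
    · exact lt_asymm h3 (hd v v)
  · have := hd u []
    rw [List.append_nil] at this
    exact lt_asymm h1 this

theorem getLast_suffix_flatten {β : Type*} (ws : List (List β)) (as : List ℕ) (hne : ws ≠ [])
    (hlen : ws.length = as.length) (ha : ∀ a ∈ as, 1 ≤ a) :
    ws.getLast hne <:+ (List.zipWith lrep ws as).flatten := by
  induction ws generalizing as with
  | nil => simp at hne
  | cons w ws ih =>
    rcases as with _ | ⟨a, as⟩
    · simp at hlen
    rw [List.zipWith_cons_cons, List.flatten_cons]
    by_cases h0 : ws = []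
    · subst h0
      obtain ⟨b, rfl⟩ := Nat.exists_eq_add_of_le' (ha a (by simp))
      simp [lrep, List.replicate_succ']
    · rw [List.getLast_cons h0]
      exact (ih as h0 (by simpa using hlen)
        fun a h => ha a (List.mem_cons_of_mem _ h)).trans (List.suffix_append _ _)

theorem getLast_le_of_pairwise (ws : List (List α)) (hne : ws ≠ [])
    (hdec : ws.Pairwise (fun w w' => List.Lex (· < ·) w' w)) :
    ∀ w ∈ ws, ws.getLast hne ≤ w := by
  intro w hw
  have e := List.dropLast_append_getLast hne
  generalize ws.getLast hne = m at e ⊢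
  rw [← e, List.pairwise_append] at hdec
  rw [← e, List.mem_append, List.mem_singleton] at hw
  rcases hw with hw | hw
  · exact le_of_lt (hdec.2.2 w hw _ (by simp))
  · exact hw.ge

/-- If `x = w₁^{a₁} w₂^{a₂} ⋯ w_k^{a_k}` is a Lyndon decomposition of a nonempty string `x`
(the `wᵢ` are Lyndon words with `w₁ ≻ w₂ ≻ ⋯ ≻ w_k` and all `aᵢ ≥ 1`), then `w_k` is the
minimal suffix of `x`. -/
theorem stmt_5 (x : List α) (ws : List (List α)) (as : List ℕ)
    (hne : ws ≠ []) (hlen : ws.length = as.length)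
    (ha : ∀ a ∈ as, 1 ≤ a)
    (hlyn : ∀ w ∈ ws, IsLyndon w)
    (hdec : ws.Pairwise (fun w w' => List.Lex (· < ·) w' w))
    (hx : x = (List.zipWith lrep ws as).flatten) :
    IsMinSuffix x (ws.getLast hne) := by
  subst hx
  refine ⟨(hlyn _ (List.getLast_mem hne)).1, getLast_suffix_flatten ws as hne hlen ha, ?_⟩
  intro t ht hsuf
  obtain ⟨p, hp, s, r, hs, hsp, rfl⟩ := exists_suffix_of_suffix_flatten _ t ht hsuf
  obtain ⟨i, hi, rfl⟩ := List.mem_iff_getElem.1 hp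
  rw [List.getElem_zipWith] at hsp
  -- `s` is a suffix of a power of `ws[i]`, itself a concatenation: locate the copy it starts in.
  obtain ⟨w, hw, s', r', hs', hsw, rfl⟩ := exists_suffix_of_suffix_flatten _ s hs hsp
  have hmem : w ∈ ws := by
    rw [List.eq_of_mem_replicate hw]
    exact List.getElem_mem _
  have key : ws.getLast hne ≤ s' ++ r' ++ r :=
    calc ws.getLast hne ≤ w := getLast_le_of_pairwise ws hne hdec w hmem
      _ ≤ s' := (hlyn w hmem).le_suffix hs' hsw
      _ ≤ s' ++ r' := self_le_append _ _
      _ ≤ s' ++ r' ++ r := self_le_append _ _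
  exact not_lt.2 key
end

section
/- Let x = u v^α where v is the minimal suffix of x, α ≥ 1 is an integer, and u does not have v as a suffix. Let u = z_1^{β_1} z_2^{β_2} ⋯ z_ℓ^{β_ℓ} be the Lyndon decomposition of u. Then x = z_1^{β_1} z_2^{β_2} ⋯ z_ℓ^{β_ℓ} v^α is the Lyndon decomposition of x (in particular, v is a Lyndon word and z_ℓ ≻ v). -/
/-!
The word `v` is Lyndon because each proper suffix `s` of `v` is also a suffix of `x`, so `v ≺ s`.

For the ordering it suffices, by transitivity, to show `v ≺ z` for the last factor `z` of `u`.
Minimality of `v` gives `v ≺ z v^a`. Now `z = v` is excluded since `v` is not a suffix of `u`. If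
`z ≺ v` because of a differing letter, then `z v^a ≺ v`, a contradiction. If `v = z w` with `w`
nonempty, cancelling `z` in `v ≺ z v^a` gives `w ≺ v^a`; but `w` is a proper suffix of `v`, so
`v ≺ w`, and as `w` is shorter than `v` this is witnessed by a differing letter, whence
`v^a ≺ w`, a contradiction. The case analysis is carried by `lex_prefix_or_append`.
-/

variable {α : Type*} [LinearOrder α]

/-- A lexicographic inequality comes either from the prefix relation or from a differing letter; in
the second case it persists under arbitrary extensions of both words. -/
theorem lex_prefix_or_append {s t : List α} (h : List.Lex (· < ·) s t) :
    s <+: t ∨ ∀ c d, List.Lex (· < ·) (s ++ c) (t ++ d) := by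
  induction h with
  | nil => exact Or.inl List.nil_prefix
  | rel h => exact Or.inr fun c d => List.Lex.rel h
  | cons _ ih =>
    rcases ih with ih | ih
    · exact Or.inl ((List.prefix_cons_inj _).2 ih)
    · exact Or.inr fun c d => List.Lex.cons (ih c d)

theorem lex_append_of_length_lt {s t : List α} (h : List.Lex (· < ·) s t)
    (hl : t.length < s.length) (c d : List α) : List.Lex (· < ·) (s ++ c) (t ++ d) := by
  rcases lex_prefix_or_append h with hp | h'
  · exact absurd hp.length_le (by omega)
  · exact h' c d

theorem lex_of_append_left {p s t : List α} (h : List.Lex (· < ·) (p ++ s) (p ++ t)) :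
    List.Lex (· < ·) s t := by
  induction p with
  | nil => exact h
  | cons b p ih =>
    rw [List.cons_append, List.cons_append, List.lex_cons_iff] at h
    exact ih h

theorem IsMinSuffix.lex_of_ne {x v t : List α} (hv : IsMinSuffix x v) (ht : t ≠ [])
    (htx : t <:+ x) (hne : t ≠ v) : List.Lex (· < ·) v t := by
  rcases trichotomous_of (List.Lex (· < ·)) v t with h | h | h
  · exact h
  · exact absurd h.symm hne
  · exact absurd h (hv.2.2 t ht htx)

theorem IsMinSuffix.isLyndon {x v : List α} (hv : IsMinSuffix x v) : IsLyndon v := by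
  refine ⟨hv.1, fun p s hp hs h => List.Lex.append_right _ _ (hv.lex_of_ne hs ?_ ?_)⟩
  · exact List.IsSuffix.trans ⟨p, h.symm⟩ hv.2.1
  · intro e
    rw [e] at h
    exact hp (List.self_eq_append_left.1 h)

/-- If `v` is the minimal suffix of `u v^(n+1)` but not a suffix of `u`, then `v` is smaller than
every nonempty suffix `z` of `u`. -/
theorem lex_of_suffix {u v z : List α} {n : ℕ} (hv : IsMinSuffix (u ++ lrep v (n + 1)) v)
    (hns : ¬ v <:+ u) (hz : z <:+ u) (hz0 : z ≠ []) : List.Lex (· < ·) v z := by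
  have hrep : lrep v (n + 1) = v ++ lrep v n := by simp [lrep, List.replicate_succ]
  have hzpos : 0 < z.length := List.length_pos_iff.2 hz0
  have h1 : List.Lex (· < ·) v (z ++ lrep v (n + 1)) := by
    apply hv.lex_of_ne (by simp [hz0])
    · obtain ⟨p, rfl⟩ := hz
      exact ⟨p, by simp⟩
    · intro e
      have := congrArg List.length e
      rw [hrep] at this
      simp only [List.length_append] at this
      omega
  rcases trichotomous_of (List.Lex (· < ·)) v z with h | h | h
  · exact h
  · exact absurd (h ▸ hz) hns
  · exfalso
    rcases lex_prefix_or_append h with ⟨w, hw⟩ | h'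
    · have hw0 : w ≠ [] := by
        rintro rfl
        rw [List.append_nil] at hw
        exact hns (hw ▸ hz)
      have hlen : w.length < v.length := by
        rw [← hw, List.length_append]
        omega
      have h2 : List.Lex (· < ·) w (lrep v (n + 1)) := by
        apply lex_of_append_left (p := z)
        rwa [hw]
      have h3 : List.Lex (· < ·) v w :=
        hv.lex_of_ne hw0 (List.IsSuffix.trans ⟨z, hw⟩ hv.2.1) (by rintro rfl; omega)
      have h4 := lex_append_of_length_lt h3 hlen (lrep v n) []
      rw [← hrep, List.append_nil] at h4
      exact asymm_of (List.Lex (· < ·)) h2 h4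
    · have h4 := h' (lrep v (n + 1)) []
      rw [List.append_nil] at h4
      exact asymm_of (List.Lex (· < ·)) h1 h4

/-- Let `x = u v^a` where `v` is the minimal suffix of `x`, `a ≥ 1`, and `u` does not have `v`
as a suffix.  Let `u = z₁^{b₁} ⋯ z_ℓ^{b_ℓ}` be the Lyndon decomposition of `u`.  Then
`x = z₁^{b₁} ⋯ z_ℓ^{b_ℓ} v^a` is the Lyndon decomposition of `x`; in particular `v` is a
Lyndon word and `z_ℓ ≻ v`. -/
theorem stmt_6 (x u v : List α) (a : ℕ) (zs : List (List α)) (bs : List ℕ)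
    (hx : x = u ++ lrep v a)
    (hv : IsMinSuffix x v)
    (ha : 1 ≤ a)
    (hns : ¬ v <:+ u)
    (hlen : zs.length = bs.length)
    (hb : ∀ b ∈ bs, 1 ≤ b)
    (hlyn : ∀ z ∈ zs, IsLyndon z)
    (hdec : zs.Pairwise (fun w w' => List.Lex (· < ·) w' w))
    (hu : u = (List.zipWith lrep zs bs).flatten) :
    IsLyndon v ∧
    (zs ++ [v]).Pairwise (fun w w' => List.Lex (· < ·) w' w) ∧
    x = (List.zipWith lrep (zs ++ [v]) (bs ++ [a])).flatten := by
  obtain ⟨n, rfl⟩ : ∃ n, a = n + 1 := ⟨a - 1, by omega⟩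
  subst hx
  refine ⟨hv.isLyndon, ?_, ?_⟩
  · rw [List.pairwise_append]
    refine ⟨hdec, List.pairwise_singleton _ _, ?_⟩
    rcases List.eq_nil_or_concat' zs with rfl | ⟨zs', z, rfl⟩
    · simp
    rcases List.eq_nil_or_concat' bs with rfl | ⟨bs', b, rfl⟩
    · simp at hlen
    have hlen' : zs'.length = bs'.length := by simpa using hlen
    obtain ⟨m, rfl⟩ : ∃ m, b = m + 1 := ⟨b - 1, by have := hb b (by simp); omega⟩
    have hz : z <:+ u := by
      rw [hu, List.zipWith_append hlen']
      refine ⟨(List.zipWith lrep zs' bs').flatten ++ lrep z m, ?_⟩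
      simp [lrep, List.replicate_succ']
    have hvz : List.Lex (· < ·) v z := lex_of_suffix hv hns hz (hlyn z (by simp)).1
    rw [List.pairwise_append] at hdec
    intro y hy v' hv'
    rw [List.mem_singleton] at hv'
    subst hv'
    rw [List.mem_append, List.mem_singleton] at hy
    rcases hy with hy | rfl
    · exact lt_trans (α := List α) hvz (hdec.2.2 y hy z (by simp))
    · exact hvz
  · rw [List.zipWith_append hlen, hu]
    simp
end

section
/- Let T be a string of length n and 1 ≤ ℓ ≤ r ≤ j ≤ n. Let p_1 be the starting position of the maximal suffix in Suf[ℓ, r], with ℓ ≤ p_1 − 1, and let p_2 be the starting position of the maximal suffix in Suf[ℓ, p_1 − 1]. Set P_1 = T[p_1..j], P_2 = T[p_2..j] and ρ = T[p_2..p_1 − 1]. Assume P_1 is a prefix of P_2 and |P_2| ≤ 2|P_1|. Then ρ is the shortest period of P_2; that is, P_2 = ρ^s ρ' where s ≥ 1 and ρ' is a proper prefix of ρ, and no shorter string admits such a decomposition of P_2. Moreover, s ≥ 2. -/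
/-!
Write `d = p₁ - p₂ = |ρ|`. Since `P₂ = ρ P₁` and `P₁` is a prefix of `P₂`, peeling copies of `ρ` off
the front of `P₂` gives the decomposition `ρ^s ρ'` (`exists_lrep_of_prefix`); the bound
`|P₂| ≤ 2|P₁|` means `|ρ| ≤ |P₁|`, so at least two copies are peeled off.

For minimality, let `γ` be a period with `0 < g = |γ| < d`. Deleting the first `g` letters of `P₂`
leaves a prefix of `P₂` (`IsPeriodOf.drop_prefix`), so the suffixes `T[p₂..]` and `T[p₂+g..]` start
with the same `d - g` letters, after which they continue as `T[p₁-g..]` and `T[p₁..]`.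
Maximality of `p₂` gives `T[p₂+g..] ≼ T[p₂..]`, and cancelling the common prefix gives
`T[p₁..] ≼ T[p₁-g..]`. Maximality of `p₁` gives the reverse inequality, so two suffixes of
different lengths would be equal. In particular no appeal to the Fine–Wilf theorem is needed.
-/

variable {α : Type*} [LinearOrder α]

/-- `ρ` is a period of `w`: `w = ρ^s ρ'` for an integer `s ≥ 1` and a proper prefix `ρ'` of `ρ`. -/
def IsPeriodOf (ρ w : List α) : Prop :=
  ∃ s ρ', 1 ≤ s ∧ ρ' <+: ρ ∧ ρ' ≠ ρ ∧ w = lrep ρ s ++ ρ'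

theorem lrep_succ' (w : List α) (a : ℕ) : lrep w (a + 1) = lrep w a ++ w := by
  simp [lrep, List.replicate_succ']

theorem lrep_succ (w : List α) (a : ℕ) : lrep w (a + 1) = w ++ lrep w a := by
  simp [lrep, List.replicate_succ]

/-- A nonempty string `ρ` such that `ρP` has `P` as a prefix is a period of `ρP`: as long as
`P` is at least as long as `ρ`, one more copy of `ρ` can be peeled off. -/
theorem exists_lrep_of_prefix (ρ : List α) (hρ : ρ ≠ []) (P : List α) (h : P <+: ρ ++ P) :
    IsPeriodOf ρ (ρ ++ P) := by
  induction hn : P.length using Nat.strong_induction_on generalizing P with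
  | _ n ih =>
    by_cases hlt : P.length < ρ.length
    · refine ⟨1, P, le_rfl, ?_, ?_, by simp [lrep]⟩
      · exact List.prefix_of_prefix_length_le h (List.prefix_append _ _) hlt.le
      · rintro rfl
        exact lt_irrefl _ hlt
    · obtain ⟨Q, rfl⟩ :=
        List.prefix_of_prefix_length_le (List.prefix_append ρ P) h (not_lt.mp hlt)
      have hQ : Q <+: ρ ++ Q := (List.prefix_append_right_inj ρ).mp h
      have hpos := List.length_pos_iff.mpr hρ
      obtain ⟨s, ρ', hs, h1, h2, h3⟩ := ih Q.length (by simp at hn; omega) Q hQ rfl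
      exact ⟨s + 1, ρ', by omega, h1, h2, by rw [h3, lrep_succ, List.append_assoc]⟩

theorem IsPeriodOf.ne_nil {γ w : List α} (h : IsPeriodOf γ w) : γ ≠ [] := by
  obtain ⟨s, ρ', -, h1, h2, -⟩ := h
  rintro rfl
  exact h2 (List.prefix_nil.mp h1)

/-- Deleting the first copy of a period leaves a prefix of the string. -/
theorem IsPeriodOf.drop_prefix {γ w : List α} (h : IsPeriodOf γ w) : w.drop γ.length <+: w := by
  obtain ⟨s, ρ', hs, h1, -, rfl⟩ := h
  obtain ⟨s, rfl⟩ := Nat.exists_eq_add_of_le' hs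
  have e : (lrep γ (s + 1) ++ ρ').drop γ.length = lrep γ s ++ ρ' := by
    rw [lrep_succ, List.append_assoc, List.drop_left]
  rw [e, lrep_succ', List.append_assoc, List.prefix_append_right_inj]
  exact h1.trans (List.prefix_append _ _)

theorem lex_append_left (u : List α) {x y : List α} (h : List.Lex (· < ·) x y) :
    List.Lex (· < ·) (u ++ x) (u ++ y) := by
  induction u with
  | nil => exact h
  | cons a u ih => exact List.Lex.cons ih

theorem eq_of_not_lex {x y : List α} (h₁ : ¬ List.Lex (· < ·) x y)
    (h₂ : ¬ List.Lex (· < ·) y x) : x = y :=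
  le_antisymm (not_lt.mp h₂) (not_lt.mp h₁)

/-- Let `T` be a string of length `n`, `1 ≤ ℓ ≤ r ≤ j ≤ n`, let `p₁` be the starting position of
the maximal suffix in `Suf[ℓ, r]` with `ℓ ≤ p₁ - 1`, and `p₂` the starting position of the
maximal suffix in `Suf[ℓ, p₁-1]`.  Set `P₁ = T[p₁..j]`, `P₂ = T[p₂..j]`, `ρ = T[p₂..p₁-1]`.
If `P₁` is a prefix of `P₂` and `|P₂| ≤ 2|P₁|`, then `ρ` is the shortest period of `P₂`:
`P₂ = ρ^s ρ'` with `s ≥ 1` (indeed `s ≥ 2`) and `ρ'` a proper prefix of `ρ`, and every period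
of `P₂` has length at least `|ρ|`. -/
theorem stmt_8 (T : List α) (ℓ r j p₁ p₂ : ℕ)
    (hℓ : 1 ≤ ℓ) (hℓr : ℓ ≤ r) (hrj : r ≤ j) (hj : j ≤ T.length)
    (hp11 : ℓ ≤ p₁) (hp12 : p₁ ≤ r)
    (hp1max : ∀ q, ℓ ≤ q → q ≤ r → ¬ List.Lex (· < ·) (sufFrom T p₁) (sufFrom T q))
    (hℓp1 : ℓ ≤ p₁ - 1)
    (hp21 : ℓ ≤ p₂) (hp22 : p₂ ≤ p₁ - 1)
    (hp2max : ∀ q, ℓ ≤ q → q ≤ p₁ - 1 →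
      ¬ List.Lex (· < ·) (sufFrom T p₂) (sufFrom T q))
    (hpre : substr T p₁ j <+: substr T p₂ j)
    (hlen : (substr T p₂ j).length ≤ 2 * (substr T p₁ j).length) :
    (∃ s ρ', 2 ≤ s ∧ ρ' <+: substr T p₂ (p₁ - 1) ∧ ρ' ≠ substr T p₂ (p₁ - 1) ∧
        substr T p₂ j = lrep (substr T p₂ (p₁ - 1)) s ++ ρ') ∧
    ∀ γ : List α, IsPeriodOf γ (substr T p₂ j) →
      (substr T p₂ (p₁ - 1)).length ≤ γ.length := by
  -- Work with 0-indexed offsets: `p₂ = a + 1`, `p₁ = a + d + 1`, and `|P₁| = m`.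
  obtain ⟨a, rfl⟩ : ∃ a, p₂ = a + 1 := ⟨p₂ - 1, by omega⟩
  obtain ⟨d, rfl⟩ : ∃ d, p₁ = a + d + 1 := ⟨p₁ - (a + 1), by omega⟩
  obtain ⟨m, rfl⟩ : ∃ m, j = a + d + m := ⟨j - (a + d), by omega⟩
  have e1 : substr T (a + d + 1) (a + d + m) = (T.drop (a + d)).take m := by
    unfold substr; congr 1; omega
  have e2 : substr T (a + 1) (a + d + m) = (T.drop a).take (d + m) := by
    unfold substr; congr 1; omega
  have e3 : substr T (a + 1) (a + d + 1 - 1) = (T.drop a).take d := by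
    unfold substr; congr 1; omega
  rw [e1, e2] at hpre hlen
  rw [e2, e3]
  have split : (T.drop a).take (d + m) = (T.drop a).take d ++ (T.drop (a + d)).take m := by
    rw [List.take_add, List.drop_drop]
  have len_ρ : ((T.drop a).take d).length = d := by simp; omega
  have len_P : ((T.drop (a + d)).take m).length = m := by simp; omega
  have hdm : d ≤ m := by
    rw [split, List.length_append, len_ρ, len_P] at hlen; omega
  constructor
  · rw [split] at hpre ⊢
    generalize (T.drop a).take d = ρ at *
    generalize (T.drop (a + d)).take m = P at *
    have hρ : ρ ≠ [] := by
      rintro rfl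
      simp at len_ρ
      omega
    obtain ⟨Q, rfl⟩ :=
      List.prefix_of_prefix_length_le (List.prefix_append ρ P) hpre (by omega)
    have hQ : Q <+: ρ ++ Q := (List.prefix_append_right_inj ρ).mp hpre
    obtain ⟨s, ρ', hs, h1, h2, h3⟩ := exists_lrep_of_prefix ρ hρ Q hQ
    exact ⟨s + 1, ρ', by omega, h1, h2, by rw [h3, lrep_succ, List.append_assoc]⟩
  · intro γ hγ
    rw [len_ρ]
    by_contra! hlt
    have hg : 0 < γ.length := List.length_pos_iff.mpr hγ.ne_nil
    have hdrop := hγ.drop_prefix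
    generalize γ.length = g at *
    -- The common prefix of length `d - g` of `T[p₂..]` and `T[p₂+g..]`.
    have hcommon : (T.drop (a + g)).take (d - g) = (T.drop a).take (d - g) := by
      have h := (hdrop.take (d - g)).eq_of_length (by simp; omega)
      rw [List.drop_take, List.drop_drop, List.take_take, List.take_take] at h
      rwa [min_eq_left (by omega), min_eq_left (by omega)] at h
    have s1 : T.drop a = (T.drop a).take (d - g) ++ T.drop (a + d - g) := by
      conv_lhs => rw [← List.take_append_drop (d - g) (T.drop a), List.drop_drop]
      congr 2; omega
    have s2 : T.drop (a + g) = (T.drop a).take (d - g) ++ T.drop (a + d) := by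
      conv_lhs => rw [← List.take_append_drop (d - g) (T.drop (a + g)), List.drop_drop, hcommon]
      congr 2; omega
    have h1 : ¬ List.Lex (· < ·) (T.drop (a + d - g)) (T.drop (a + d)) := by
      intro h
      have h' := lex_append_left ((T.drop a).take (d - g)) h
      rw [← s1, ← s2] at h'
      exact hp2max (a + g + 1) (by omega) (by omega) h'
    have h2 : ¬ List.Lex (· < ·) (T.drop (a + d)) (T.drop (a + d - g)) :=
      hp1max (a + d - g + 1) (by omega) (by omega)
    have := congrArg List.length (eq_of_not_lex h1 h2)
    simp at this
    omega
end

section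
/- Let T be a string of length n, and let 1 ≤ p ≤ j < n. If p is not j-active, then p is not (j+1)-active. -/
/-!
If `p` is not `j`-active, some `p'` with `p < p' ≤ j` has `T[p..j] ≺ T[p'..j]`.  The string
`T[p'..j]` is the shorter one, so `T[p..j]` is not a prefix of it and the comparison is decided at
a mismatching letter.  Passing from `j` to `j + 1` only appends letters on the right, which does
not affect that mismatch (`lex_append_of_length_le`), so the same `p'` witnesses that `p` is not
`(j+1)`-active.
-/

variable {α : Type*} [LinearOrder α]

/-- Position `p` is `j`-active in `T`: there is no position `p'` with `p < p' ≤ j` and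
`T[p'..j] ≻ T[p..j]`. -/
def JActive (T : List α) (p j : ℕ) : Prop :=
  ∀ p', p < p' → p' ≤ j → ¬ List.Lex (· < ·) (substr T p j) (substr T p' j)

/-- If `u ≺ v` and `v` is not longer than `u`, the order is decided by a mismatch rather than by
the prefix rule, hence it survives appending arbitrary strings to both sides. -/
theorem lex_append_of_length_le {β : Type*} {r : β → β → Prop} {u v : List β}
    (h : List.Lex r u v) (hl : v.length ≤ u.length) (a b : List β) :
    List.Lex r (u ++ a) (v ++ b) := by
  induction h with
  | nil => simp at hl
  | cons _ ih => exact List.Lex.cons (ih (by simpa using hl))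
  | rel h => exact List.Lex.rel h

theorem substr_succ_right (T : List α) {i j : ℕ} (hij : i ≤ j) :
    ∃ a, substr T i (j + 1) = substr T i j ++ a := by
  have e : j + 1 - i + 1 = (j - i + 1) + 1 := by omega
  exact ⟨_, by rw [substr, e, List.take_add]; rfl⟩

/-- Let `T` be a string of length `n` and `1 ≤ p ≤ j < n`.  If `p` is not `j`-active, then `p`
is not `(j+1)`-active. -/
theorem stmt_10 (T : List α) (p j : ℕ)
    (hp : 1 ≤ p) (hpj : p ≤ j) (hj : j < T.length)
    (h : ¬ JActive T p j) :
    ¬ JActive T p (j + 1) := by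
  unfold JActive at h
  push Not at h
  obtain ⟨p', hlt, hle, hlex⟩ := h
  intro hact
  obtain ⟨a, ha⟩ := substr_succ_right T hpj
  obtain ⟨b, hb⟩ := substr_succ_right T hle
  refine hact p' hlt (by omega) ?_
  rw [ha, hb]
  refine lex_append_of_length_le hlex ?_ a b
  simp only [substr, List.length_take, List.length_drop]
  omega
end

section
/- Let T be a string of length n, let 1 ≤ p ≤ p' ≤ j ≤ n, and suppose p is j-active and T[p'..j] is a prefix of T[p..j]. Then p' is j-active. -/
/-!
If `T[q..j] ≻ T[p'..j]` with `p' < q ≤ j`, then `T[q..j]` is shorter than `T[p'..j]`, so the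
comparison is decided by a mismatching letter rather than by a proper prefix. Such a mismatch
persists when `T[p'..j]` is extended to the right (`lex_append_of_length_le`), in particular to
`T[p..j]`. Hence `T[q..j] ≻ T[p..j]`, contradicting that `p` is `j`-active.
-/

variable {α : Type*} [LinearOrder α]

/-- When `z` is no longer than `y`, the relation `y ≺ z` comes from a mismatch inside `y`, so
appending letters to `y` does not affect it. -/
theorem lex_append_of_length_le_s11 {β : Type*} {r : β → β → Prop} {y z : List β} (w : List β)
    (h : List.Lex r y z) (hlen : z.length ≤ y.length) : List.Lex r (y ++ w) z := by
  induction h with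
  | nil => simp at hlen
  | cons _ ih => exact List.Lex.cons (ih (by simpa using hlen))
  | rel h => exact List.Lex.rel h

/-- Let `T` be a string of length `n`, `1 ≤ p ≤ p' ≤ j ≤ n`, and suppose `p` is `j`-active and
`T[p'..j]` is a prefix of `T[p..j]`.  Then `p'` is `j`-active. -/
theorem stmt_11 (T : List α) (p p' j : ℕ)
    (hp : 1 ≤ p) (hpp' : p ≤ p') (hp'j : p' ≤ j) (hj : j ≤ T.length)
    (hact : JActive T p j)
    (hpre : substr T p' j <+: substr T p j) :
    JActive T p' j := by
  intro q hq hqj hlex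
  obtain ⟨w, hw⟩ := hpre
  refine hact q (lt_of_le_of_lt hpp' hq) hqj ?_
  rw [← hw]
  refine lex_append_of_length_le_s11 w hlex ?_
  simp only [substr, List.length_take, List.length_drop]
  omega
end

section
/- Let T be a string, w = T[i..j] a nonempty substring, and 1 ≤ k ≤ |w|. Let s_k denote the k-th smallest nonempty suffix of w in lexicographic order. Then there exists a suffix of T with NotLarger(w, ·) ≥ k; let S be the lexicographically minimal suffix of T such that k' = NotLarger(w, S) ≥ k. Then s_k is a prefix of S, and there are exactly k' − k nonempty suffixes of w that are prefixes of S longer than s_k. -/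
/-!
Every suffix `u` of `w` extends to a suffix `u ++ r` of `T`, and `u ⪯ u ++ r`, so
`NotLarger w (u ++ r) ≥ NotLarger w u`. With `u = sk` this gives the existence claim, and
`S ⪯ sk ++ r` for the minimal `S`. Conversely `NotLarger w S ≥ k` forces `sk ⪯ S`, since otherwise
the suffixes of `w` below `S` would be a proper subset of those below `sk`. A string between `sk`
and `sk ++ r` has `sk` as a prefix.

For the count, `k' - k` is the number of suffixes `u` of `w` with `sk ≺ u ⪯ S`. Such a `u` is a
prefix of `S`: otherwise `u` and `S` differ at a letter, so that the extension `u ++ r` in `T` is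
still smaller than `S` (`append_lt_of_lt_of_not_prefix`) while `NotLarger w (u ++ r) ≥ k`,
contradicting the minimality of `S`. Moreover `sk ≺ u` among prefixes of `S` just means that `u`
is longer.
-/

variable {α : Type*} [LinearOrder α]

open Classical in
/-- `NotLarger w S` is the number of nonempty suffixes of `w` that are lexicographically `⪯ S`.
The nonempty suffixes of `w` are `w.drop t` for `0 ≤ t < |w|`. -/
noncomputable def NotLarger (w S : List α) : ℕ :=
  ((Finset.range w.length).filter fun t => ¬ List.Lex (· < ·) S (w.drop t)).card

lemma prefix_le {a b : List α} (h : a <+: b) : a ≤ b := by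
  obtain ⟨r, rfl⟩ := h
  rw [← not_lt]
  induction a with
  | nil => exact List.not_lt_nil _
  | cons x a ih =>
    rw [List.cons_append, List.cons_lt_cons_iff]
    rintro (h | ⟨-, h⟩)
    · exact lt_irrefl x h
    · exact ih h

/-- If `a ≺ b` because of a differing letter, the inequality survives any extension of `a`. -/
lemma append_lt_of_lt_of_not_prefix {a b : List α} (r : List α) (h : a < b) (hp : ¬ a <+: b) :
    a ++ r < b := by
  induction a generalizing b with
  | nil => exact absurd List.nil_prefix hp
  | cons x a ih =>
    cases b with
    | nil => exact absurd h (List.not_lt_nil _)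
    | cons y b =>
      rw [List.cons_append, List.cons_lt_cons_iff]
      rw [List.cons_lt_cons_iff] at h
      rcases h with h | ⟨rfl, h⟩
      · exact Or.inl h
      · exact Or.inr ⟨rfl, ih h fun hab => hp (by simpa using hab)⟩

/-- The strings between `a` and an extension of `a` all extend `a`. -/
lemma prefix_of_le_of_le_append {a b r : List α} (h₁ : a ≤ b) (h₂ : b ≤ a ++ r) : a <+: b := by
  by_contra hp
  have hne : a ≠ b := fun h => hp (h ▸ List.prefix_rfl)
  exact absurd (append_lt_of_lt_of_not_prefix r (lt_of_le_of_ne h₁ hne) hp) (not_lt.mpr h₂)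

open Classical in
lemma notLarger_eq (w S : List α) :
    NotLarger w S = ((Finset.range w.length).filter fun t => w.drop t ≤ S).card := by
  unfold NotLarger
  congr 1
  ext t
  simp only [Finset.mem_filter]
  exact and_congr_right fun _ => not_lt (a := S) (b := w.drop t)

lemma notLarger_mono (w : List α) {S S' : List α} (h : S ≤ S') :
    NotLarger w S ≤ NotLarger w S' := by
  classical
  rw [notLarger_eq, notLarger_eq]
  exact Finset.card_le_card
    (Finset.monotone_filter_right _ fun t _ (ht : w.drop t ≤ S) => ht.trans h)

/-- `NotLarger w` increases strictly when its argument reaches a nonempty suffix of `w`. -/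
lemma notLarger_lt_of_lt {w S u : List α} (hu : u ≠ []) (huw : u <:+ w) (h : S < u) :
    NotLarger w S < NotLarger w u := by
  classical
  rw [notLarger_eq, notLarger_eq]
  apply Finset.card_lt_card
  have hdrop : w.drop (w.length - u.length) = u := (List.suffix_iff_eq_drop.mp huw).symm
  have hpos : 0 < u.length := List.length_pos_iff.mpr hu
  have hlen := huw.length_le
  rw [Finset.ssubset_iff_of_subset
    (Finset.monotone_filter_right _ fun t _ (ht : w.drop t ≤ S) => ht.trans h.le)]
  refine ⟨w.length - u.length, ?_, ?_⟩
  · simp only [Finset.mem_filter, Finset.mem_range, hdrop]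
    exact ⟨by omega, le_rfl⟩
  · simp only [Finset.mem_filter, hdrop]
    exact fun h' => absurd h (not_lt.mpr h'.2)

lemma exists_append_suffix_of_suffix_infix {β : Type*} {T w u : List β} (hw : w <:+: T)
    (hu : u <:+ w) : ∃ r, u ++ r <:+ T := by
  obtain ⟨p, q, rfl⟩ := hw
  obtain ⟨v, rfl⟩ := hu
  exact ⟨q, p ++ v, by simp⟩

open Classical in
/-- Let `w = T[i..j]` be a nonempty substring of `T` and `1 ≤ k ≤ |w|`; let `sk` be the `k`-th
smallest nonempty suffix of `w` (characterized by: `sk` is a nonempty suffix of `w` with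
`NotLarger w sk = k`).  Then some suffix `S` of `T` has `NotLarger w S ≥ k`; and if `S` is the
lexicographically minimal suffix of `T` with `k' = NotLarger w S ≥ k`, then `sk` is a prefix of
`S` and exactly `k' - k` nonempty suffixes of `w` are prefixes of `S` longer than `sk`. -/
theorem stmt_14 (T : List α) (i j k : ℕ) (w sk : List α)
    (hw : w = substr T i j) (hwne : w ≠ [])
    (hk1 : 1 ≤ k) (hk2 : k ≤ w.length)
    (hsk1 : sk ≠ []) (hsk2 : sk <:+ w) (hsk3 : NotLarger w sk = k) :
    (∃ S, S <:+ T ∧ k ≤ NotLarger w S) ∧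
    ∀ S, S <:+ T → k ≤ NotLarger w S →
      (∀ S', S' <:+ T → k ≤ NotLarger w S' → ¬ List.Lex (· < ·) S' S) →
      sk <+: S ∧
      ((Finset.range w.length).filter
          fun t => (w.drop t) <+: S ∧ sk.length < (w.drop t).length).card
        = NotLarger w S - k := by
  have hinf : w <:+: T := by
    rw [hw]
    exact (List.take_prefix _ _).isInfix.trans (List.drop_suffix _ _).isInfix
  obtain ⟨r, hr⟩ := exists_append_suffix_of_suffix_infix hinf hsk2
  have hrk : k ≤ NotLarger w (sk ++ r) :=
    hsk3 ▸ notLarger_mono w (prefix_le (List.prefix_append sk r))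
  refine ⟨⟨sk ++ r, hr, hrk⟩, fun S _ hSk hmin => ?_⟩
  have hmin' : ∀ S', S' <:+ T → k ≤ NotLarger w S' → S ≤ S' := fun S' h₁ h₂ =>
    not_lt.mp (hmin S' h₁ h₂)
  have hle : sk ≤ S := by
    by_contra hlt
    have := notLarger_lt_of_lt hsk1 hsk2 (not_le.mp hlt)
    omega
  have hpre : sk <+: S := prefix_of_le_of_le_append hle (hmin' _ hr hrk)
  refine ⟨hpre, ?_⟩
  rw [← hsk3, notLarger_eq, notLarger_eq, ← Finset.card_sdiff_of_subset
    (Finset.monotone_filter_right _ fun t _ (ht : w.drop t ≤ sk) => ht.trans hle)]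
  congr 1
  ext t
  simp only [Finset.mem_filter, Finset.mem_sdiff, Finset.mem_range, not_and, not_le]
  constructor
  · rintro ⟨ht, hp, hlen⟩
    refine ⟨⟨ht, prefix_le hp⟩, fun _ => lt_of_le_of_ne ?_ ?_⟩
    · exact prefix_le (List.prefix_of_prefix_length_le hpre hp hlen.le)
    · intro h
      rw [← h] at hlen
      exact lt_irrefl _ hlen
  · rintro ⟨⟨ht, hS⟩, hlt⟩
    have hlt := hlt ht
    have hp : w.drop t <+: S := by
      obtain ⟨r', hr'⟩ := exists_append_suffix_of_suffix_infix hinf (List.drop_suffix t w)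
      refine prefix_of_le_of_le_append hS (hmin' _ hr' ?_)
      exact hsk3 ▸ notLarger_mono w (hlt.le.trans (prefix_le (List.prefix_append _ r')))
    refine ⟨ht, hp, not_le.mp fun hlen => ?_⟩
    exact absurd hlt (not_lt.mpr (prefix_le (List.prefix_of_prefix_length_le hp hpre hlen)))
end

section
/- Let ρ be a nonempty string that is not a prefix of the string y, let x be any string, and let k ≥ 1 be an integer. Then y ≺ ρ^k x if and only if y ≺ ρ. -/
/-!
When `ρ` is not a prefix of `y`, the comparison of `y` with any string that starts with `ρ` is
settled within `ρ` (`lex_append_iff_of_not_prefix`, by induction on `ρ`). For `k ≥ 1` the string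
`ρ^k x` starts with `ρ`, so it compares with `y` exactly as `ρ` does.
-/

variable {α : Type*} [LinearOrder α]

/-- If `ρ` is not a prefix of `y`, then `y ≺ ρ` is decided within `ρ`: either `y` is a proper
prefix of `ρ` or the two strings first differ inside `ρ`. So appending `z` to `ρ` changes nothing. -/
theorem lex_append_iff_of_not_prefix (ρ y z : List α) (hnp : ¬ ρ <+: y) :
    List.Lex (· < ·) y (ρ ++ z) ↔ List.Lex (· < ·) y ρ := by
  induction ρ generalizing y with
  | nil => exact absurd List.nil_prefix hnp
  | cons a ρ ih =>
    cases y with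
    | nil => exact ⟨fun _ => .nil, fun _ => .nil⟩
    | cons b y =>
      have key : b = a → (List.Lex (· < ·) y (ρ ++ z) ↔ List.Lex (· < ·) y ρ) :=
        fun hba => ih y fun h => hnp (List.cons_prefix_cons.2 ⟨hba.symm, h⟩)
      constructor
      · intro h
        cases h with
        | cons h => exact .cons ((key rfl).1 h)
        | rel h => exact .rel h
      · intro h
        cases h with
        | cons h => exact .cons ((key rfl).2 h)
        | rel h => exact .rel h

/-- Let `ρ` be a nonempty string that is not a prefix of `y`, let `x` be any string, and
`k ≥ 1`.  Then `y ≺ ρ^k x` if and only if `y ≺ ρ`. -/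
theorem stmt_17 (ρ y x : List α) (k : ℕ)
    (hρ : ρ ≠ []) (hnp : ¬ ρ <+: y) (hk : 1 ≤ k) :
    List.Lex (· < ·) y (lrep ρ k ++ x) ↔ List.Lex (· < ·) y ρ := by
  -- Since `k ≥ 1`, `ρ^k x = ρ (ρ^(k-1) x)`, so only the leading copy of `ρ` matters.
  obtain ⟨n, rfl⟩ := Nat.exists_eq_add_of_le' hk
  have hrep : lrep ρ (n + 1) ++ x = ρ ++ (lrep ρ n ++ x) := by
    simp [lrep, List.replicate_succ]
  rw [hrep]
  exact lex_append_iff_of_not_prefix ρ y _ hnp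
end
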